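/- For ψ varying so that ψ + L stays in the relative interiors of all cones τ₀, …, τ_n ∈ N₀(τ), the set N(ψ) = {σ ∈ F : σ° ∩ (ψ + L) ≠ ∅} is constant; consequently the common image p(v₀) = ⋯ = p(v_n) of compatible lifts lies in the interior of τ. -/

import Mathlib

open Set

/-- The standard integer lattice (as a set) in `Fin n → ℝ`. -/
def lattSet (n : ℕ) : Set (Fin n → ℝ) := {x | ∀ i, ∃ m : ℤ, x i = m}

/-- The convex cone generated by a finite set of vectors. -/
def coneGen {V : Type*} [AddCommGroup V] [Module ℝ V] (s : Finset V) : Set V :=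
  {x | ∃ c : V → ℝ, (∀ v, 0 ≤ c v) ∧ x = ∑ v ∈ s, c v • v}

/-- A (finitely generated) polyhedral convex cone. -/
def IsPolyCone {V : Type*} [AddCommGroup V] [Module ℝ V] (C : Set V) : Prop :=
  ∃ s : Finset V, C = coneGen s

/-- A rational polyhedral cone: generated by finitely many lattice vectors. -/
def IsRatPolyCone {n : ℕ} (C : Set (Fin n → ℝ)) : Prop :=
  ∃ s : Finset (Fin n → ℝ), (↑s : Set (Fin n → ℝ)) ⊆ lattSet n ∧ C = coneGen s

/-- `F` is a face of the cone `σ`: a subcone such that whenever a sum of two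
elements of `σ` lies in `F`, both elements lie in `F`. -/
def IsFace {V : Type*} [AddCommGroup V] [Module ℝ V] (σ F : Set V) : Prop :=
  F ⊆ σ ∧ ∀ x ∈ σ, ∀ y ∈ σ, x + y ∈ F → x ∈ F ∧ y ∈ F

/-- A fan: a collection of strongly convex polyhedral cones such that the
intersection of any two members is a member and is a face of each. -/
def IsFan {V : Type*} [AddCommGroup V] [Module ℝ V] (F : Set (Set V)) : Prop :=
  (∀ C ∈ F, IsPolyCone C) ∧
  (∀ C ∈ F, ∀ x ∈ C, -x ∈ C → x = 0) ∧
  (∀ C ∈ F, ∀ D ∈ F, C ∩ D ∈ F ∧ IsFace C (C ∩ D) ∧ IsFace D (C ∩ D))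

/-- `N(ψ) = {σ ∈ F : σ° ∩ (ψ + L) ≠ ∅}`. -/
def KSZset {n : ℕ} (F : Set (Set (Fin n → ℝ))) (L : Submodule ℝ (Fin n → ℝ))
    (ψ : Fin n → ℝ) : Set (Set (Fin n → ℝ)) :=
  {σ ∈ F | (intrinsicInterior ℝ σ ∩ {x | ∃ l ∈ L, x = ψ + l}).Nonempty}

/-!
Let `N(ψ) ⊆ N(φ)`. For `σ ∈ N(φ)` contained in some `τ ∈ N(ψ)`, take a functional that is
nonnegative on `τ` and whose zero set in `τ` is the face `σ`, and minimise it on `τ ∩ (ψ + L)`. The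
cell `ρ ∈ N(ψ)` of a minimiser also lies in `N(φ)`. Optimality along `ρ` depends only on the
directions in `L`, so it persists over `φ`, where the minimum is `0` because of `σ`. Hence `ρ ⊆ σ`,
and moving from `ρ` into `σ` gives `σ ∈ N(ψ)`. Now the unions of `N(ψ)` and of `N(φ) \ N(ψ)` are
closed, cover the connected set `φ + L` and are disjoint on it, so the second one is empty.

The class of `ψ` is therefore `{φ | N(ψ) ⊆ N(φ)}`, which is convex and in which every segment
ending at `ψ` can be prolonged beyond `ψ`; thus `ψ` lies in its relative interior.
-/

open scoped Topology

section Weyl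

variable {R V : Type*} [Field R] [LinearOrder R] [IsStrictOrderedRing R] [AddCommGroup V]
  [Module R V]

theorem dualFG_bot [FiniteDimensional R V] :
    (⊥ : PointedCone R V).DualFG (.id : Module.Dual R V →ₗ[R] V →ₗ[R] R) := by
  have hdual : PointedCone.dual (.id : Module.Dual R V →ₗ[R] V →ₗ[R] R)
      ((⊤ : PointedCone R (Module.Dual R V)) : Set (Module.Dual R V)) = ⊥ :=
    PointedCone.dual_univ (Module.eval_apply_injective R)
  exact hdual ▸ .dual_of_fg _ Module.Finite.fg_top

-- Fourier–Motzkin elimination of `t` from the inequalities `f (x - t • v) ≥ 0`, `t ≥ 0`.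
theorem mem_dual_sup_hull_singleton {s : Finset (Module.Dual R V)} {v x : V} :
    x ∈ PointedCone.dual .id (s : Set (Module.Dual R V)) ⊔ PointedCone.hull R {v} ↔
      (∀ f ∈ s, 0 ≤ f v → 0 ≤ f x) ∧
      ∀ f ∈ s, 0 ≤ f v → ∀ g ∈ s, g v < 0 → 0 ≤ f v * g x - g v * f x := by
  classical
  constructor
  · rw [Submodule.mem_sup]
    rintro ⟨y, hy, z, hz, rfl⟩
    obtain ⟨⟨c, hc⟩, rfl⟩ := Submodule.mem_span_singleton.1 hz
    have hy : ∀ f ∈ s, 0 ≤ f y := fun f hf => hy hf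
    simp only [map_add, Nonneg.mk_smul, map_smul, smul_eq_mul]
    refine ⟨fun f hf hfv => add_nonneg (hy f hf) (mul_nonneg hc hfv), fun f hf hfv g hg hgv => ?_⟩
    linear_combination mul_nonneg hfv (hy g hg) + mul_nonneg (neg_nonneg.2 hgv.le) (hy f hf)
  · rintro ⟨hpos, hpair⟩
    obtain ⟨t, ht, hmax⟩ := Finset.exists_max_image
      (insert 0 ((s.filter fun g => g v < 0).image fun g => g x / g v)) id
      (Finset.insert_nonempty _ _)
    have ht0 : 0 ≤ t := hmax 0 (Finset.mem_insert_self _ _)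
    have hlower : ∀ g ∈ s, g v < 0 → g x / g v ≤ t := fun g hg hgv =>
      hmax _ (Finset.mem_insert_of_mem (Finset.mem_image_of_mem _ (Finset.mem_filter.2 ⟨hg, hgv⟩)))
    have hupper : ∀ f ∈ s, 0 ≤ f v → t * f v ≤ f x := by
      intro f hf hfv
      simp only [Finset.mem_insert, Finset.mem_image, Finset.mem_filter] at ht
      obtain rfl | ⟨g, ⟨hg, hgv⟩, rfl⟩ := ht
      · simpa using hpos f hf hfv
      · rw [div_mul_eq_mul_div, div_le_iff_of_neg hgv]
        linarith [hpair f hf hfv g hg hgv]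
    refine Submodule.mem_sup.2 ⟨x - t • v, fun f hf => ?_, t • v, ?_, sub_add_cancel _ _⟩
    · simp only [LinearMap.id_apply, map_sub, map_smul, smul_eq_mul, sub_nonneg]
      obtain hfv | hfv := le_or_gt 0 (f v)
      · exact hupper f hf hfv
      · exact (div_le_iff_of_neg hfv).1 (hlower f hf hfv)
    · exact PointedCone.smul_mem _ ht0 (PointedCone.subset_hull rfl)

theorem dualFG_sup_hull_singleton {K : PointedCone R V} (hK : K.DualFG .id) (v : V) :
    (K ⊔ PointedCone.hull R {v}).DualFG .id := by
  classical
  obtain ⟨s, rfl⟩ := hK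
  refine ⟨s.filter (0 ≤ · v) ∪ Finset.image₂ (fun f g => f v • g - g v • f)
    (s.filter (0 ≤ · v)) (s.filter (· v < 0)), ?_⟩
  ext x
  rw [mem_dual_sup_hull_singleton]
  simp only [PointedCone.mem_dual, Finset.mem_coe, Finset.mem_union, Finset.mem_filter,
    Finset.mem_image₂]
  constructor
  · intro h
    refine ⟨fun f hf hfv => h (.inl ⟨hf, hfv⟩), fun f hf hfv g hg hgv => ?_⟩
    simpa using h (.inr ⟨f, ⟨hf, hfv⟩, g, ⟨hg, hgv⟩, rfl⟩)
  · rintro ⟨hpos, hpair⟩ _ (⟨hf, hfv⟩ | ⟨f, ⟨hf, hfv⟩, g, ⟨hg, hgv⟩, rfl⟩)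
    · exact hpos _ hf hfv
    · simpa using hpair f hf hfv g hg hgv

theorem dualFG_of_fg [FiniteDimensional R V] {K : PointedCone R V} (hK : K.FG) :
    K.DualFG .id := by
  classical
  obtain ⟨s, rfl⟩ := hK
  induction s using Finset.induction_on with
  | empty => simpa using dualFG_bot
  | insert v s _ ih =>
    rw [Finset.coe_insert, Submodule.span_insert, sup_comm]
    exact dualFG_sup_hull_singleton ih v

end Weyl

section Optimization

variable {V W : Type*} [AddCommGroup V] [Module ℝ V] [AddCommGroup W] [Module ℝ W]
  [FiniteDimensional ℝ W] {K : PointedCone ℝ V}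

theorem isClosed_setOf_prodMk_mem {K : PointedCone ℝ (W × ℝ)} (hK : K.FG) (w : W) :
    IsClosed {r : ℝ | (w, r) ∈ K} := by
  obtain ⟨s, rfl⟩ := dualFG_of_fg hK
  have heq : {r : ℝ | (w, r) ∈ PointedCone.dual .id (s : Set (Module.Dual ℝ (W × ℝ)))} =
      ⋂ f ∈ s, {r : ℝ | 0 ≤ f (w, 0) + r * f (0, 1)} := by
    ext r
    have hwr (f : Module.Dual ℝ (W × ℝ)) : f (w, r) = f (w, 0) + r * f (0, 1) := by
      rw [← smul_eq_mul, ← map_smul, ← map_add]; simp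
    simp [← hwr]
  rw [heq]
  exact isClosed_biInter fun f _ => isClosed_le continuous_const (by fun_prop)

theorem exists_min_on_fiber (hK : K.FG) (p : V →ₗ[ℝ] W) (f : Module.Dual ℝ V)
    (hf : ∀ x ∈ K, 0 ≤ f x) {x₀ : V} (hx₀ : x₀ ∈ K) :
    ∃ x ∈ K, p x = p x₀ ∧ ∀ y ∈ K, p y = p x₀ → f x ≤ f y := by
  let A : Set ℝ := {r | (p x₀, r) ∈ K.map (p.prod f)}
  have hbdd : BddBelow A := ⟨0, by
    rintro _ ⟨x, hx, hpx⟩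
    exact (hf x hx).trans_eq (Prod.ext_iff.1 hpx).2⟩
  have hclosed : IsClosed A := isClosed_setOf_prodMk_mem (Submodule.FG.map _ hK) _
  obtain ⟨x, hx, hpx⟩ := hclosed.csInf_mem ⟨f x₀, x₀, hx₀, rfl⟩ hbdd
  obtain ⟨hpx, hfx⟩ := Prod.ext_iff.1 hpx
  refine ⟨x, hx, hpx, fun y hy hpy => ?_⟩
  exact hfx.trans_le (csInf_le hbdd ⟨y, hy, Prod.ext hpy rfl⟩)

theorem exists_dual_exposing [FiniteDimensional ℝ V] (hK : K.FG) {x : V} (hx : x ∈ K) :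
    ∃ f : Module.Dual ℝ V, (∀ y ∈ K, 0 ≤ f y) ∧ f x = 0 ∧
      ∀ y ∈ K, f y = 0 → ∃ ε > (0 : ℝ), x - ε • y ∈ K := by
  classical
  obtain ⟨s, rfl⟩ := dualFG_of_fg hK
  have hnonneg : ∀ y ∈ PointedCone.dual .id (s : Set (Module.Dual ℝ V)),
      ∀ f ∈ s.filter (· x = 0), 0 ≤ f y :=
    fun y hy f hf => hy (Finset.mem_of_mem_filter f hf)
  refine ⟨∑ f ∈ s with f x = 0, f, fun y hy => ?_, ?_, fun y hy hsum => ?_⟩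
  · simpa only [LinearMap.sum_apply] using Finset.sum_nonneg (hnonneg y hy)
  · simpa only [LinearMap.sum_apply] using
      Finset.sum_eq_zero fun f hf => (Finset.mem_filter.1 hf).2
  · rw [LinearMap.sum_apply, Finset.sum_eq_zero_iff_of_nonneg (hnonneg y hy)] at hsum
    have hfeasible : ∀ᶠ ε in 𝓝 (0 : ℝ), ∀ f ∈ s, 0 ≤ f (x - ε • y) := by
      refine (Filter.eventually_all_finset s).2 fun f hf => ?_
      obtain hfx | hfx : f x = 0 ∨ 0 < f x := (hx hf).eq_or_lt'
      · simp [hfx, hsum f (Finset.mem_filter.2 ⟨hf, hfx⟩)]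
      · have hcont : Continuous fun ε : ℝ => f x - ε * f y := by fun_prop
        have hpos : ∀ᶠ ε in 𝓝 (0 : ℝ), 0 < f x - ε * f y :=
          hcont.continuousAt.eventually_const_lt (by simpa using hfx)
        filter_upwards [hpos] with ε hε
        simpa using hε.le
    obtain ⟨ε, hε0, hε⟩ := hfeasible.exists_gt
    exact ⟨ε, hε0, fun f hf => hε f hf⟩

theorem isClosed_of_fg [FiniteDimensional ℝ V] [TopologicalSpace V] [IsTopologicalAddGroup V]
    [ContinuousSMul ℝ V] [T2Space V] (hK : K.FG) : IsClosed (K : Set V) := by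
  obtain ⟨s, rfl⟩ := dualFG_of_fg hK
  exact PointedCone.isClosed_dual fun f => f.continuous_of_finiteDimensional

end Optimization

section RelInt

variable {V W : Type*} [NormedAddCommGroup V] [NormedSpace ℝ V] [NormedAddCommGroup W]
  [NormedSpace ℝ W] {C : Set V} {x y : V}

theorem eventually_prolong_mem_intrinsicInterior (hx : x ∈ intrinsicInterior ℝ C)
    (hy : y ∈ affineSpan ℝ C) : ∀ᶠ ε in 𝓝 (0 : ℝ), x + ε • (x - y) ∈ intrinsicInterior ℝ C := by
  obtain ⟨x, hx, rfl⟩ := hx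
  have : Nonempty (affineSpan ℝ C) := ⟨x⟩
  have hcont : Continuous fun ε : ℝ => AffineMap.lineMap x (⟨y, hy⟩ : affineSpan ℝ C) (-ε) :=
    AffineMap.lineMap_continuous.comp continuous_neg
  have hev : ∀ᶠ ε in 𝓝 (0 : ℝ), AffineMap.lineMap x (⟨y, hy⟩ : affineSpan ℝ C) (-ε) ∈
      interior ((↑) ⁻¹' C : Set (affineSpan ℝ C)) :=
    hcont.continuousAt.eventually_mem (isOpen_interior.mem_nhds (by simpa using hx))
  filter_upwards [hev] with ε hε
  refine ⟨_, hε, ?_⟩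
  simp only [AffineMap.lineMap_apply, AffineSubspace.coe_vadd, AffineSubspace.coe_vsub, vadd_eq_add,
    vsub_eq_sub, Submodule.coe_smul]
  module

theorem mem_intrinsicInterior_of_prolong [FiniteDimensional ℝ V] (hC : Convex ℝ C) (hx : x ∈ C)
    (h : ∀ y ∈ C, ∃ ε > (0 : ℝ), x + ε • (x - y) ∈ C) : x ∈ intrinsicInterior ℝ C := by
  let U : Set (affineSpan ℝ C) := (↑) ⁻¹' C
  obtain ⟨_, y, hy, rfl⟩ := Set.Nonempty.intrinsicInterior hC ⟨x, hx⟩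
  obtain ⟨ε, hε, hz⟩ := h y (interior_subset (s := U) hy)
  have : Nonempty (affineSpan ℝ C) := ⟨y⟩
  let z : affineSpan ℝ C := ⟨x + ε • (x - y), subset_affineSpan ℝ C hz⟩
  let r : ℝ := ε / (1 + ε)
  have hr : r ∈ Icc (0 : ℝ) 1 :=
    ⟨by positivity, (div_le_one (by positivity)).2 (by linarith)⟩
  have hcoe (w : affineSpan ℝ C) :
      (AffineMap.homothety z r w : V) = AffineMap.lineMap (z : V) (w : V) r := by
    simp [AffineMap.homothety_apply, AffineMap.lineMap_apply]
  have hopen : IsOpen (AffineMap.homothety z r '' interior U) :=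
    AffineMap.homothety_isOpenMap z r (by positivity) _ isOpen_interior
  have hsub : AffineMap.homothety z r '' interior U ⊆ U := by
    rintro _ ⟨w, hw, rfl⟩
    have hwC : (w : V) ∈ C := interior_subset (s := U) hw
    exact mem_preimage.2 (hcoe w ▸ hC.lineMap_mem hz hwC hr)
  refine ⟨_, interior_maximal hsub hopen ⟨y, hy, rfl⟩, ?_⟩
  rw [hcoe, AffineMap.lineMap_apply_module]
  simp only [z, r]
  match_scalars <;> field_simp <;> ring

theorem intrinsicInterior_subset_intrinsicInterior_closure [FiniteDimensional ℝ V]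
    (hC : Convex ℝ C) : intrinsicInterior ℝ C ⊆ intrinsicInterior ℝ (closure C) := by
  refine fun x hx => mem_intrinsicInterior_of_prolong hC.closure
    (subset_closure (intrinsicInterior_subset hx)) fun y hy => ?_
  have hspan : y ∈ affineSpan ℝ C :=
    intrinsicClosure_subset_affineSpan (intrinsicClosure_eq_closure ℝ C ▸ hy)
  obtain ⟨ε, hε, h⟩ := (eventually_prolong_mem_intrinsicInterior hx hspan).exists_gt
  exact ⟨ε, hε, subset_closure (intrinsicInterior_subset h)⟩

theorem image_intrinsicInterior_subset [FiniteDimensional ℝ W] (hC : Convex ℝ C) (p : V →ₗ[ℝ] W) :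
    p '' intrinsicInterior ℝ C ⊆ intrinsicInterior ℝ (p '' C) := by
  rintro _ ⟨x, hx, rfl⟩
  refine mem_intrinsicInterior_of_prolong (hC.linear_image p)
    (mem_image_of_mem p (intrinsicInterior_subset hx)) ?_
  rintro _ ⟨y, hy, rfl⟩
  obtain ⟨ε, hε, h⟩ :=
    (eventually_prolong_mem_intrinsicInterior hx (subset_affineSpan ℝ C hy)).exists_gt
  exact ⟨ε, hε, _, intrinsicInterior_subset h, by simp⟩

variable {K : PointedCone ℝ V}

theorem exists_sub_smul_mem_of_mem_intrinsicInterior (hx : x ∈ intrinsicInterior ℝ (K : Set V))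
    (hy : y ∈ K) : ∃ ε > (0 : ℝ), x - ε • y ∈ K := by
  have hxy : x + y ∈ affineSpan ℝ (K : Set V) :=
    subset_affineSpan ℝ _ (K.add_mem (intrinsicInterior_subset hx) hy)
  obtain ⟨ε, hε, h⟩ := (eventually_prolong_mem_intrinsicInterior hx hxy).exists_gt
  exact ⟨ε, hε, by simpa [← sub_eq_add_neg] using intrinsicInterior_subset h⟩

variable [FiniteDimensional ℝ V]

theorem mem_intrinsicInterior_cone_iff :
    x ∈ intrinsicInterior ℝ (K : Set V) ↔ x ∈ K ∧ ∀ y ∈ K, ∃ ε > (0 : ℝ), x - ε • y ∈ K := by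
  refine ⟨fun hx => ⟨intrinsicInterior_subset hx, fun y =>
    exists_sub_smul_mem_of_mem_intrinsicInterior hx⟩, fun ⟨hx, h⟩ =>
    mem_intrinsicInterior_of_prolong K.convex hx fun y hy => ?_⟩
  obtain ⟨ε, hε, hmem⟩ := h y hy
  have hdecomp : x + ε • (x - y) = (x - ε • y) + ε • x := by module
  exact ⟨ε, hε, hdecomp ▸ K.add_mem hmem (K.smul_mem hε.le hx)⟩

theorem add_smul_mem_intrinsicInterior {r : ℝ} (hx : x ∈ K)
    (hy : y ∈ intrinsicInterior ℝ (K : Set V)) (hr : 0 < r) :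
    x + r • y ∈ intrinsicInterior ℝ (K : Set V) := by
  rw [mem_intrinsicInterior_cone_iff] at hy ⊢
  refine ⟨K.add_mem hx (K.smul_mem hr.le hy.1), fun z hz => ?_⟩
  obtain ⟨ε, hε, hmem⟩ := hy.2 z hz
  refine ⟨r * ε, by positivity, ?_⟩
  convert K.add_mem hx (K.smul_mem hr.le hmem) using 1
  module

end RelInt

section Cone

variable {V : Type*} [AddCommGroup V] [Module ℝ V] {F : Set (Set V)} {C D : Set V} {x y : V}

theorem coneGen_eq_hull (s : Finset V) : coneGen s = PointedCone.hull ℝ (s : Set V) := by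
  classical
  ext x
  simp only [SetLike.mem_coe, PointedCone.hull, Submodule.mem_span_finset']
  constructor
  · rintro ⟨c, hc, rfl⟩
    exact ⟨fun v => ⟨c v, hc v⟩, Finset.sum_coe_sort s fun v => c v • v⟩
  · rintro ⟨c, rfl⟩
    refine ⟨fun v => if hv : v ∈ s then c ⟨v, hv⟩ else 0, fun v => ?_, ?_⟩
    · dsimp only
      split_ifs with hv
      exacts [(c ⟨v, hv⟩).2, le_rfl]
    · rw [← Finset.sum_coe_sort s]
      exact Finset.sum_congr rfl fun v _ => by simp [Nonneg.coe_smul]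

theorem IsPolyCone.exists_fg (hC : IsPolyCone C) :
    ∃ K : PointedCone ℝ V, K.FG ∧ (K : Set V) = C := by
  obtain ⟨s, rfl⟩ := hC
  exact ⟨PointedCone.hull ℝ s, ⟨s, rfl⟩, (coneGen_eq_hull s).symm⟩

theorem IsPolyCone.isClosed [FiniteDimensional ℝ V] [TopologicalSpace V] [IsTopologicalAddGroup V]
    [ContinuousSMul ℝ V] [T2Space V] (hC : IsPolyCone C) : IsClosed C := by
  obtain ⟨K, hK, rfl⟩ := hC.exists_fg
  exact isClosed_of_fg hK

namespace IsFan

theorem mem_of_add_mem (hF : IsFan F) (hC : C ∈ F) (hD : D ∈ F) (hx : x ∈ C) (hy : y ∈ C)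
    (h : x + y ∈ D) : x ∈ D ∧ y ∈ D := by
  obtain ⟨K, -, rfl⟩ := (hF.1 C hC).exists_fg
  have hface := (hF.2.2 _ hC D hD).2.1.2 x hx y hy ⟨K.add_mem hx hy, h⟩
  exact ⟨hface.1.2, hface.2.2⟩

theorem mem_of_sub_smul_mem (hF : IsFan F) (hC : C ∈ F) (hD : D ∈ F) (hx : x ∈ D) (hy : y ∈ C)
    {ε : ℝ} (hε : 0 < ε) (h : x - ε • y ∈ C) : y ∈ D := by
  obtain ⟨K, -, rfl⟩ := (hF.1 C hC).exists_fg
  obtain ⟨K', -, rfl⟩ := (hF.1 D hD).exists_fg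
  have hsum : x - ε • y + ε • y ∈ K' := by simpa using hx
  exact (PointedCone.smul_mem_iff K' hε).1
    (hF.mem_of_add_mem hC hD h (K.smul_mem hε.le hy) hsum).2

theorem exists_smallest_mem (hF : IsFan F) (hfin : F.Finite) (hcomplete : ⋃₀ F = univ) (x : V) :
    ∃ C ∈ F, x ∈ C ∧ ∀ D ∈ F, x ∈ D → C ⊆ D := by
  obtain ⟨C₀, hC₀⟩ := mem_sUnion.1 (hcomplete ▸ mem_univ x)
  obtain ⟨C, ⟨hC, hxC⟩, hmin⟩ := (hfin.sep (x ∈ ·)).exists_minimal ⟨C₀, hC₀⟩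
  refine ⟨C, hC, hxC, fun D hD hxD => ?_⟩
  exact (hmin ⟨(hF.2.2 C hC D hD).1, hxC, hxD⟩ inter_subset_left).trans inter_subset_right

end IsFan

end Cone

section Fan

variable {V : Type*} [NormedAddCommGroup V] [NormedSpace ℝ V] {F : Set (Set V)} {C D : Set V}
  {x : V}

namespace IsFan

theorem subset_of_mem_intrinsicInterior (hF : IsFan F) (hC : C ∈ F) (hD : D ∈ F)
    (hx : x ∈ intrinsicInterior ℝ C) (hxD : x ∈ D) : C ⊆ D := by
  intro y hy
  obtain ⟨K, -, rfl⟩ := (hF.1 C hC).exists_fg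
  obtain ⟨ε, hε, h⟩ := exists_sub_smul_mem_of_mem_intrinsicInterior hx hy
  exact hF.mem_of_sub_smul_mem hC hD hxD hy hε h

variable [FiniteDimensional ℝ V]

theorem eventually_mem_of_mem (hF : IsFan F) (hfin : F.Finite) (x : V) :
    ∀ᶠ z in 𝓝 x, ∀ C ∈ F, z ∈ C → x ∈ C := by
  refine (Filter.eventually_all_finite hfin).2 fun C hC => ?_
  by_cases hx : x ∈ C
  · exact .of_forall fun _ _ => hx
  · filter_upwards [(hF.1 C hC).isClosed.isOpen_compl.mem_nhds hx] with z hz hzC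
    exact absurd hzC hz

theorem exists_mem_intrinsicInterior (hF : IsFan F) (hfin : F.Finite) (hcomplete : ⋃₀ F = univ)
    (x : V) : ∃ C ∈ F, x ∈ intrinsicInterior ℝ C := by
  obtain ⟨C, hC, hxC, hmin⟩ := hF.exists_smallest_mem hfin hcomplete x
  refine ⟨C, hC, ?_⟩
  obtain ⟨K, -, rfl⟩ := (hF.1 C hC).exists_fg
  refine mem_intrinsicInterior_cone_iff.2 ⟨hxC, fun y hy => ?_⟩
  have hcont : Continuous fun ε : ℝ => x - ε • y := by fun_prop
  obtain ⟨ε, hε, hstar⟩ := ((hcont.tendsto' 0 x (by simp)).eventually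
    (hF.eventually_mem_of_mem hfin x)).exists_gt
  obtain ⟨D, hD, hz⟩ := mem_sUnion.1 (hcomplete ▸ mem_univ (x - ε • y))
  have hyD : y ∈ D := hmin D hD (hstar D hD hz) hy
  obtain ⟨K', -, rfl⟩ := (hF.1 D hD).exists_fg
  have hsum : x - ε • y + ε • y ∈ K := by simpa using hxC
  exact ⟨ε, hε, (hF.mem_of_add_mem hD hC hz (K'.smul_mem hε.le hyD) hsum).1⟩

end IsFan

end Fan

section Slice

theorem isPreconnected_setOf_sub_mem {V : Type*} [AddCommGroup V] [Module ℝ V] [TopologicalSpace V]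
    [ContinuousAdd V] [ContinuousSMul ℝ V] (L : Submodule ℝ V) (v : V) :
    IsPreconnected {x | x - v ∈ L} := by
  have hconv : Convex ℝ ((fun x => x - v) ⁻¹' (L : Set V)) := by
    simpa only [sub_eq_add_neg] using L.convex.translate_preimage_left (-v)
  exact hconv.isPreconnected

theorem apply_le_apply_of_isMinOn_slice {V : Type*} [NormedAddCommGroup V] [NormedSpace ℝ V]
    {K C : PointedCone ℝ V} {L : Submodule ℝ V} {f : Module.Dual ℝ V} {x y z : V} (hCK : C ≤ K)
    (hz : z ∈ intrinsicInterior ℝ (C : Set V)) (hmin : IsMinOn f {w | w ∈ K ∧ w - z ∈ L} z)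
    (hy : y ∈ C) (hx : x ∈ K) (hxy : x - y ∈ L) : f y ≤ f x := by
  obtain ⟨ε, hε, hsub⟩ := exists_sub_smul_mem_of_mem_intrinsicInterior hz hy
  have hmove : z - ε • y + ε • x ∈ K := K.add_mem (hCK hsub) (K.smul_mem hε.le hx)
  have hdecomp : z - ε • y + ε • x - z = ε • (x - y) := by module
  have hle : f z ≤ f z - ε * f y + ε * f x := by
    simpa using isMinOn_iff.1 hmin _ ⟨hmove, hdecomp ▸ L.smul_mem ε hxy⟩
  exact le_of_mul_le_mul_left (by linarith) hε

end Slice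

section KSZ

variable {n : ℕ} {F : Set (Set (Fin n → ℝ))} {L : Submodule ℝ (Fin n → ℝ)} {ψ φ : Fin n → ℝ}
  {ρ σ τ : Set (Fin n → ℝ)}

theorem mem_KSZset : σ ∈ KSZset F L ψ ↔ σ ∈ F ∧ ∃ x ∈ intrinsicInterior ℝ σ, x - ψ ∈ L := by
  simp only [KSZset, Set.Nonempty, mem_inter_iff, mem_ofPred_eq]
  refine and_congr_right fun _ => exists_congr fun x => and_congr_right fun _ => ?_
  exact ⟨fun ⟨l, hl, hx⟩ => by simpa [hx] using hl, fun hx => ⟨x - ψ, hx, by abel⟩⟩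

theorem exists_mem_KSZset_of_sub_mem (hF : IsFan F) (hfin : F.Finite) (hcomplete : ⋃₀ F = univ)
    {x : Fin n → ℝ} (hx : x - ψ ∈ L) : ∃ σ ∈ KSZset F L ψ, x ∈ intrinsicInterior ℝ σ := by
  obtain ⟨σ, hσ, hxσ⟩ := hF.exists_mem_intrinsicInterior hfin hcomplete x
  exact ⟨σ, mem_KSZset.2 ⟨hσ, x, hxσ, hx⟩, hxσ⟩

theorem mem_KSZset_of_subset (hF : IsFan F) (hρσ : ρ ⊆ σ) (hρψ : ρ ∈ KSZset F L ψ)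
    (hρφ : ρ ∈ KSZset F L φ) (hσφ : σ ∈ KSZset F L φ) : σ ∈ KSZset F L ψ := by
  obtain ⟨hρF, y, hy, hyψ⟩ := mem_KSZset.1 hρψ
  obtain ⟨-, z, hz, hzφ⟩ := mem_KSZset.1 hρφ
  obtain ⟨hσF, x, hx, hxφ⟩ := mem_KSZset.1 hσφ
  obtain ⟨K, -, rfl⟩ := (hF.1 ρ hρF).exists_fg
  obtain ⟨K', -, rfl⟩ := (hF.1 σ hσF).exists_fg
  obtain ⟨ε, hε, hsub⟩ :=
    exists_sub_smul_mem_of_mem_intrinsicInterior hy (intrinsicInterior_subset hz)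
  refine mem_KSZset.2
    ⟨hσF, y - ε • z + ε • x, add_smul_mem_intrinsicInterior (hρσ hsub) hx hε, ?_⟩
  have hdecomp : y - ε • z + ε • x - ψ = (y - ψ) + ε • ((x - φ) - (z - φ)) := by module
  exact hdecomp ▸ L.add_mem hyψ (L.smul_mem ε (L.sub_mem hxφ hzφ))

theorem mem_KSZset_of_subset_of_KSZset_subset (hF : IsFan F) (hfin : F.Finite)
    (hcomplete : ⋃₀ F = univ) (hle : KSZset F L ψ ⊆ KSZset F L φ) (hστ : σ ⊆ τ)
    (hτ : τ ∈ KSZset F L ψ) (hσ : σ ∈ KSZset F L φ) : σ ∈ KSZset F L ψ := by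
  obtain ⟨hσF, x, hx, hxφ⟩ := mem_KSZset.1 hσ
  obtain ⟨hτF, w, hw, hwψ⟩ := mem_KSZset.1 hτ
  have hxσ := intrinsicInterior_subset hx
  obtain ⟨K, hK, rfl⟩ := (hF.1 τ hτF).exists_fg
  obtain ⟨f, hf, hfx, hface⟩ := exists_dual_exposing hK (hστ hxσ)
  obtain ⟨z, hzK, hzw, hmin⟩ := exists_min_on_fiber hK L.mkQ f hf (intrinsicInterior_subset hw)
  have hzψ : z - ψ ∈ L := by
    simpa using L.add_mem ((Submodule.Quotient.eq L).1 hzw) hwψ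
  obtain ⟨ρ, hρψ, hz⟩ := exists_mem_KSZset_of_sub_mem hF hfin hcomplete hzψ
  obtain ⟨hρF, y, hy, hyφ⟩ := mem_KSZset.1 (hle hρψ)
  have hρK : ρ ⊆ K := hF.subset_of_mem_intrinsicInterior hρF hτF hz hzK
  have hyK := hρK (intrinsicInterior_subset hy)
  have hfy : f y = 0 := by
    obtain ⟨C, -, rfl⟩ := (hF.1 ρ hρF).exists_fg
    have hle : f y ≤ f x := apply_le_apply_of_isMinOn_slice hρK hz
      (fun v hv => hmin v hv.1 (((Submodule.Quotient.eq L).2 hv.2).trans hzw))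
      (intrinsicInterior_subset hy) (hστ hxσ) (by simpa using L.sub_mem hxφ hyφ)
    exact le_antisymm (hle.trans_eq hfx) (hf y hyK)
  obtain ⟨ε, hε, hsub⟩ := hface y hyK hfy
  have hyσ : y ∈ σ := hF.mem_of_sub_smul_mem hτF hσF hxσ hyK hε hsub
  have hρσ := hF.subset_of_mem_intrinsicInterior hρF hσF hy hyσ
  exact mem_KSZset_of_subset hF hρσ hρψ (hle hρψ) hσ

theorem KSZset_eq_of_subset (hF : IsFan F) (hfin : F.Finite) (hcomplete : ⋃₀ F = univ)
    (hle : KSZset F L ψ ⊆ KSZset F L φ) : KSZset F L φ = KSZset F L ψ := by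
  refine Subset.antisymm (fun σ hσ => by_contra fun hσψ => ?_) hle
  have hclosed {S : Set (Set (Fin n → ℝ))} (hS : S ⊆ KSZset F L φ) : IsClosed (⋃₀ S) := by
    have hSF : S ⊆ F := fun C hC => (mem_KSZset.1 (hS hC)).1
    rw [sUnion_eq_biUnion]
    exact (hfin.subset hSF).isClosed_biUnion fun C hC => (hF.1 C (hSF hC)).isClosed
  have hmeets {S : Set (Set (Fin n → ℝ))} {C : Set (Fin n → ℝ)} (hC : C ∈ KSZset F L φ)
      (hCS : C ∈ S) : ({x | x - φ ∈ L} ∩ ⋃₀ S).Nonempty := by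
    obtain ⟨-, x, hx, hxφ⟩ := mem_KSZset.1 hC
    exact ⟨x, hxφ, C, hCS, intrinsicInterior_subset hx⟩
  have hcover : {x | x - φ ∈ L} ⊆ ⋃₀ KSZset F L ψ ∪ ⋃₀ (KSZset F L φ \ KSZset F L ψ) := by
    intro x hx
    obtain ⟨C, hC, hxC⟩ := exists_mem_KSZset_of_sub_mem hF hfin hcomplete hx
    rw [← sUnion_union, union_sdiff_cancel hle]
    exact ⟨C, hC, intrinsicInterior_subset hxC⟩
  obtain ⟨τ, hτ, -⟩ : ∃ τ ∈ KSZset F L ψ, ψ ∈ intrinsicInterior ℝ τ :=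
    exists_mem_KSZset_of_sub_mem hF hfin hcomplete (by simp)
  obtain ⟨x, hx, ⟨τ, hτ, hxτ⟩, σ, ⟨hσ, hσψ⟩, hxσ⟩ :=
    isPreconnected_closed_iff.1 (isPreconnected_setOf_sub_mem L φ) _ _ (hclosed hle)
      (hclosed sdiff_subset) hcover (hmeets (hle hτ) hτ) (hmeets hσ ⟨hσ, hσψ⟩)
  obtain ⟨ρ, hρ, hxρ⟩ := exists_mem_KSZset_of_sub_mem hF hfin hcomplete hx
  have hρF := (mem_KSZset.1 hρ).1
  have hρτ := hF.subset_of_mem_intrinsicInterior hρF (mem_KSZset.1 hτ).1 hxρ hxτ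
  have hρσ := hF.subset_of_mem_intrinsicInterior hρF (mem_KSZset.1 hσ).1 hxρ hxσ
  have hρψ := mem_KSZset_of_subset_of_KSZset_subset hF hfin hcomplete hle hρτ hτ hρ
  exact hσψ (mem_KSZset_of_subset hF hρσ hρψ hρ hσ)

theorem convex_setOf_subset_KSZset (hF : IsFan F) (T : Set (Set (Fin n → ℝ))) :
    Convex ℝ {ψ | T ⊆ KSZset F L ψ} := by
  refine convex_iff_forall_pos.2 fun ψ hψ φ hφ a b ha hb _ σ hσ => ?_
  obtain ⟨hσF, x, hx, hxψ⟩ := mem_KSZset.1 (hψ hσ)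
  obtain ⟨-, y, hy, hyφ⟩ := mem_KSZset.1 (hφ hσ)
  obtain ⟨K, -, rfl⟩ := (hF.1 σ hσF).exists_fg
  have hax : a • x ∈ K := K.smul_mem ha.le (intrinsicInterior_subset hx)
  refine mem_KSZset.2 ⟨hσF, a • x + b • y, add_smul_mem_intrinsicInterior hax hy hb, ?_⟩
  have hdecomp : a • x + b • y - (a • ψ + b • φ) = a • (x - ψ) + b • (y - φ) := by module
  exact hdecomp ▸ L.add_mem (L.smul_mem a hxψ) (L.smul_mem b hyφ)

theorem eventually_prolong_mem_KSZset (hσψ : σ ∈ KSZset F L ψ) (hσφ : σ ∈ KSZset F L φ) :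
    ∀ᶠ ε in 𝓝 (0 : ℝ), σ ∈ KSZset F L (ψ + ε • (ψ - φ)) := by
  obtain ⟨hσF, x, hx, hxψ⟩ := mem_KSZset.1 hσψ
  obtain ⟨-, y, hy, hyφ⟩ := mem_KSZset.1 hσφ
  have hspan : y ∈ affineSpan ℝ σ := subset_affineSpan ℝ σ (intrinsicInterior_subset hy)
  filter_upwards [eventually_prolong_mem_intrinsicInterior hx hspan] with ε hε
  refine mem_KSZset.2 ⟨hσF, _, hε, ?_⟩
  have hdecomp : x + ε • (x - y) - (ψ + ε • (ψ - φ)) =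
      (x - ψ) + ε • ((x - ψ) - (y - φ)) := by module
  exact hdecomp ▸ L.add_mem hxψ (L.smul_mem ε (L.sub_mem hxψ hyφ))

theorem mem_intrinsicInterior_setOf_subset_KSZset (hF : IsFan F) {T : Set (Set (Fin n → ℝ))}
    (hT : T.Finite) (hψ : T ⊆ KSZset F L ψ) :
    ψ ∈ intrinsicInterior ℝ {φ | T ⊆ KSZset F L φ} := by
  refine mem_intrinsicInterior_of_prolong (convex_setOf_subset_KSZset hF T) hψ fun φ hφ => ?_
  have hev : ∀ᶠ ε in 𝓝 (0 : ℝ), ∀ σ ∈ T, σ ∈ KSZset F L (ψ + ε • (ψ - φ)) :=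
    (Filter.eventually_all_finite hT).2 fun σ hσ =>
      eventually_prolong_mem_KSZset (hψ hσ) (hφ hσ)
  exact hev.exists_gt

end KSZ

theorem KSZset_locally_constant_general {n : ℕ} {W : Type*} [NormedAddCommGroup W]
    [NormedSpace ℝ W] [FiniteDimensional ℝ W] {F : Set (Set (Fin n → ℝ))} (hF : IsFan F)
    (hfin : F.Finite) (hcomplete : ⋃₀ F = univ) {L : Submodule ℝ (Fin n → ℝ)}
    (p : (Fin n → ℝ) →ₗ[ℝ] W) {ψ₀ ψ : Fin n → ℝ} (hle : KSZset F L ψ₀ ⊆ KSZset F L ψ) :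
    KSZset F L ψ = KSZset F L ψ₀ ∧
      p ψ ∈ intrinsicInterior ℝ (p '' closure {ψ' | KSZset F L ψ' = KSZset F L ψ₀}) := by
  have hclass : {ψ' | KSZset F L ψ' = KSZset F L ψ₀} = {ψ' | KSZset F L ψ₀ ⊆ KSZset F L ψ'} :=
    ext fun ψ' => ⟨fun h => h.ge, fun h => KSZset_eq_of_subset hF hfin hcomplete h⟩
  refine ⟨KSZset_eq_of_subset hF hfin hcomplete hle, hclass ▸ ?_⟩
  have hconv := convex_setOf_subset_KSZset (L := L) hF (KSZset F L ψ₀)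
  have hψ : ψ ∈ intrinsicInterior ℝ {ψ' | KSZset F L ψ₀ ⊆ KSZset F L ψ'} :=
    mem_intrinsicInterior_setOf_subset_KSZset hF (hfin.subset fun σ hσ => hσ.1) hle
  exact image_intrinsicInterior_subset hconv.closure p
    (mem_image_of_mem p (intrinsicInterior_subset_intrinsicInterior_closure hconv hψ))


/-- if `N(ψ₀) = {τ₀, …, τ_N}`, then for every `ψ` such that `ψ + L` meets
the relative interior of all the `τᵢ`, the set `N(ψ)` equals `N(ψ₀)`; consequently the
common image `p ψ` lies in the relative interior of the corresponding cone
`τ = p(closure of the equivalence class of ψ₀)` of the quotient fan. -/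
theorem KSZset_locally_constant {n m N : ℕ}
    (F : Set (Set (Fin n → ℝ))) (hF : IsFan F) (hfin : F.Finite)
    (hrat : ∀ σ ∈ F, IsRatPolyCone σ) (hcomplete : ⋃₀ F = Set.univ)
    (L : Submodule ℝ (Fin n → ℝ))
    (p : (Fin n → ℝ) →ₗ[ℝ] (Fin m → ℝ))
    (hp : Function.Surjective p) (hker : LinearMap.ker p = L)
    (τ : Fin (N + 1) → Set (Fin n → ℝ)) (hτF : ∀ i, τ i ∈ F)
    (ψ₀ : Fin n → ℝ)
    (hψ₀ : KSZset F L ψ₀ = {σ | ∃ i, σ = τ i}) :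
    ∀ ψ : Fin n → ℝ,
      (∀ i, ∃ x, (∃ l ∈ L, x = ψ + l) ∧ x ∈ intrinsicInterior ℝ (τ i)) →
      KSZset F L ψ = KSZset F L ψ₀ ∧
      p ψ ∈ intrinsicInterior ℝ (p '' closure {ψ' | KSZset F L ψ' = KSZset F L ψ₀}) := by
  intro ψ hψ
  refine KSZset_locally_constant_general hF hfin hcomplete p (hψ₀.trans_subset ?_)
  rintro _ ⟨i, rfl⟩
  obtain ⟨x, hx, hxi⟩ := hψ i
  exact ⟨hτF i, x, hxi, hx⟩
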